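/- Let 𝓡 be a quasifinite domain over ℤ and let A be an 𝓡-algebra which is flat and finitely generated as an 𝓡-module. Let ℚ̄ be an algebraic closure of ℚ and let I be the (finite) set of isomorphism classes of simple modules over A ⊗_𝓡 ℚ̄. Then there exist a quasifinite domain 𝓡' over 𝓡 and two families (L_i)_{i∈I} and (P_i)_{i∈I} of modules over A ⊗_𝓡 𝓡' such that for every geometric point 𝓡' → k: the modules (L_i) ⊗_{𝓡'} k, i ∈ I, form a complete and pairwise non-isomorphic list of representatives of the isomorphism classes of simple A ⊗_𝓡 k-modules, and for each i ∈ I the base change (P_i) ⊗_{𝓡'} k, together with its natural surjection onto (L_i) ⊗_{𝓡'} k, is a projective cover of (L_i) ⊗_{𝓡'} k. -/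

import Mathlib

open TensorProduct

universe u

/-- `S` is a *quasifinite domain* over `R`: `S` is an integral domain and a commutative
`R`-algebra containing an `R`-subalgebra `R'`, finitely generated as an `R`-module, such
that `S` is the localization of `R'` at (the powers of) a single element. -/
def IsQuasifiniteDomain (R S : Type*) [CommRing R] [CommRing S] [Algebra R S] : Prop :=
  IsDomain S ∧ ∃ R' : Subalgebra R S, Module.Finite R R' ∧ ∃ r : R', IsLocalization.Away r S

/-- A bundled quasifinite domain over `R`. -/
structure QuasifiniteExtension (R : Type u) [CommRing R] : Type (u + 1) where
  carrier : Type u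
  [isCommRing : CommRing carrier]
  [isAlgebra : Algebra R carrier]
  isQuasifinite : IsQuasifiniteDomain R carrier

attribute [instance] QuasifiniteExtension.isCommRing QuasifiniteExtension.isAlgebra

/-- A bundled module over a ring `R`. -/
structure BundledModule (R : Type u) [Ring R] : Type (u + 1) where
  carrier : Type u
  [isAddCommGroup : AddCommGroup carrier]
  [isModule : Module R carrier]

attribute [instance] BundledModule.isAddCommGroup BundledModule.isModule

instance (R : Type u) [Ring R] : CoeSort (BundledModule R) (Type u) :=
  ⟨BundledModule.carrier⟩

/-- The family `V` is a complete, pairwise non-isomorphic list of representatives of the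
isomorphism classes of simple `R`-modules. -/
def IsCompleteListOfSimples (R : Type u) [Ring R] {ι : Type u}
    (V : ι → BundledModule R) : Prop :=
  (∀ i, IsSimpleModule R (V i).carrier) ∧
  (∀ i j : ι, i ≠ j → IsEmpty ((V i).carrier ≃ₗ[R] (V j).carrier)) ∧
  (∀ (N : Type u) [AddCommGroup N] [Module R N],
    IsSimpleModule R N → ∃ i, Nonempty (N ≃ₗ[R] (V i).carrier))

/-- `π : M → N` is a projective cover: `π` is surjective, `M` is projective, and no proper
submodule of `M` is mapped onto `N` by `π`. -/
def IsProjectiveCover {R : Type u} [Ring R] {M N : Type u} [AddCommGroup M] [AddCommGroup N]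
    [Module R M] [Module R N] (π : M →ₗ[R] N) : Prop :=
  Function.Surjective π ∧ Module.Projective R M ∧
    ∀ W : Submodule R M, W ≠ ⊤ → Submodule.map π W ≠ ⊤

/-- `(N, f)` is the extension of scalars (base change) of the `B`-module `M` along the
ring homomorphism `j : B →+* C`, expressed by the usual universal property: `f` is
additive and `j`-semilinear, and any additive `j`-semilinear map from `M` to a
`C`-module factors uniquely `C`-linearly through `f`. -/
def IsScalarExtension {B C : Type u} [Ring B] [Ring C] (j : B →+* C)
    (M N : Type u) [AddCommGroup M] [Module B M] [AddCommGroup N] [Module C N]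
    (f : M →+ N) : Prop :=
  (∀ (b : B) (m : M), f (b • m) = j b • f m) ∧
  ∀ (N' : Type u) [AddCommGroup N'] [Module C N'] (g : M →+ N'),
    (∀ (b : B) (m : M), g (b • m) = j b • g m) →
      ∃! h : N →ₗ[C] N', ∀ m : M, h (f m) = g m

/-- The canonical ring homomorphism `A ⊗[𝓡] S → A ⊗[𝓡] k` induced by an `𝓡`-algebra
map `S → k`. -/
noncomputable def baseChangeRingHom (𝓡 A S k : Type u) [CommRing 𝓡] [Ring A] [Algebra 𝓡 A]
    [CommRing S] [Algebra 𝓡 S] [CommRing k] [Algebra S k] [Algebra 𝓡 k]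
    [IsScalarTower 𝓡 S k] : (A ⊗[𝓡] S) →+* (A ⊗[𝓡] k) :=
  (Algebra.TensorProduct.map (AlgHom.id 𝓡 A) (IsScalarTower.toAlgHom 𝓡 S k)).toRingHom

/-!
Let `K` be an algebraic closure of the fraction field of the image of `𝓡`. Modulo its nilpotent
radical, `A ⊗ K` is a product of matrix algebras over `K`. A surjection from a finite algebra onto a
product of matrix algebras, with nilpotent kernel, is described by finitely many elements of `K` and
finitely many equations between them, so it already exists over a finitely generated
`𝓡`-subalgebra of `K`, which can be enlarged to a quasifinite domain `𝓡'`. Both surjectivity and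
nilpotence of the kernel survive arbitrary base change `𝓡' → k`. Hence over every geometric point
the simple modules are the columns of the matrix factors, and the left ideals generated by
idempotents of `A ⊗ 𝓡'` lifting diagonal matrix units are their projective covers.
-/

section

open Matrix

/-! ### Simple modules and projective covers of algebras split modulo a nilpotent ideal -/

theorem IsCompleteListOfSimples.nonempty_equiv {R : Type u} [Ring R] {ι κ : Type u}
    {V : ι → BundledModule R} {W : κ → BundledModule R}
    (hV : IsCompleteListOfSimples R V) (hW : IsCompleteListOfSimples R W) :
    Nonempty (ι ≃ κ) := by
  choose f hf using fun i => hW.2.2 _ (hV.1 i)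
  refine ⟨Equiv.ofBijective f ⟨fun i j hij => ?_, fun j => ?_⟩⟩
  · by_contra hne
    obtain ⟨eᵢ⟩ := hf i
    obtain ⟨eⱼ⟩ := hf j
    rw [← hij] at eⱼ
    exact (hV.2.1 i j hne).false (eᵢ.trans eⱼ.symm)
  · obtain ⟨i, ⟨eᵢ⟩⟩ := hV.2.2 _ (hW.1 j)
    obtain ⟨eⱼ⟩ := hf i
    refine ⟨i, ?_⟩
    by_contra hne
    exact (hW.2.1 _ _ (Ne.symm hne)).false (eᵢ.trans eⱼ)

section Idempotent

variable {R : Type*} [Ring R] {e : R}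

theorem mul_eq_self_of_mem_span_singleton (he : IsIdempotentElem e) {x : R}
    (hx : x ∈ Ideal.span {e}) : x * e = x := by
  obtain ⟨c, rfl⟩ := Submodule.mem_span_singleton.1 hx
  rw [smul_eq_mul, mul_assoc, he.eq]

theorem projective_span_singleton (he : IsIdempotentElem e) :
    Module.Projective R (Ideal.span {e}) := by
  refine Module.Projective.of_split (Ideal.span {e}).subtype
    (LinearMap.toSpanSingleton R _ ⟨e, Ideal.mem_span_singleton_self e⟩) ?_
  ext ⟨x, hx⟩
  exact mul_eq_self_of_mem_span_singleton he hx

end Idempotent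

theorem isProjectiveCover_of_forall_isNilpotent {R M : Type u} [Ring R] [AddCommGroup M]
    [Module R M] {e : R} (he : IsIdempotentElem e) {π : Ideal.span {e} →ₗ[R] M}
    (hπ : Function.Surjective π) (hker : ∀ x, π x = 0 → IsNilpotent (x : R)) :
    IsProjectiveCover π := by
  refine ⟨hπ, projective_span_singleton he, fun W hW hmap => hW ?_⟩
  let e' : Ideal.span {e} := ⟨e, Ideal.mem_span_singleton_self e⟩
  obtain ⟨w, hwW, hw⟩ : π e' ∈ W.map π := hmap ▸ Submodule.mem_top
  obtain ⟨v, hv⟩ := (hker (e' - w) (by rw [map_sub, hw, sub_self])).isUnit_one_sub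
  have hve : v • e' = w := by
    refine Subtype.ext ?_
    change (v : R) * e = w
    rw [hv, Submodule.coe_sub, sub_mul, sub_mul, one_mul, he.eq,
      mul_eq_self_of_mem_span_singleton he w.2, sub_sub_cancel]
  have heW : e' ∈ W := by
    rw [← inv_smul_smul v e', hve]
    exact W.smul_mem _ hwW
  refine eq_top_iff.2 fun x _ => ?_
  have hx : (x : R) • e' = x := Subtype.ext (mul_eq_self_of_mem_span_singleton he x.2)
  exact hx ▸ W.smul_mem _ heW

theorem smul_eq_zero_of_forall_isNilpotent_mul {R M : Type*} [Ring R] [AddCommGroup M] [Module R M]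
    [IsSimpleModule R M] {x : R} (hx : ∀ c, IsNilpotent (c * x)) (v : M) : x • v = 0 := by
  by_contra h
  obtain ⟨c, hc⟩ := IsSimpleModule.toSpanSingleton_surjective R h v
  rw [LinearMap.toSpanSingleton_apply, smul_smul] at hc
  have hv : (1 - c * x) • v = 0 := by rw [sub_smul, one_smul, hc, sub_self]
  have hv0 : v = 0 := (hx c).isUnit_one_sub.smul_eq_zero.1 hv
  exact h (by rw [hv0, smul_zero])

theorem exists_linearMap_apply_eq {R M N : Type*} [Ring R] [AddCommGroup M]
    [Module R M] [AddCommGroup N] [Module R N] {x : M} (y : N)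
    (hx : Function.Surjective (LinearMap.toSpanSingleton R M x))
    (hxy : ∀ c : R, c • x = 0 → c • y = 0) : ∃ g : M →ₗ[R] N, g x = y := by
  let q := LinearMap.toSpanSingleton R M x
  let Q := q.quotKerEquivOfSurjective hx
  have hker : q.ker ≤ (LinearMap.toSpanSingleton R N y).ker := hxy
  have hQ : Q.symm x = q.ker.mkQ 1 := by
    rw [LinearEquiv.symm_apply_eq]
    exact (one_smul R x).symm
  refine ⟨q.ker.liftQ _ hker ∘ₗ Q.symm.toLinearMap, ?_⟩
  rw [LinearMap.comp_apply, LinearEquiv.coe_coe, hQ, Submodule.mkQ_apply, Submodule.liftQ_apply,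
    LinearMap.toSpanSingleton_apply, one_smul]

/-- The product of the full matrix algebras of sizes `n i` over `T`: the split semisimple
algebras over `T`. -/
abbrev PiMatrix {κ : Type*} (n : κ → Type*) (T : Type*) := ∀ i, Matrix (n i) (n i) T

section ColumnModule

variable {κ : Type*} {n : κ → Type*} [∀ i, Fintype (n i)] [∀ i, DecidableEq (n i)]
  {k C : Type*} [CommRing k] [Ring C] [Algebra k C]

/-- The algebra homomorphism `Ψ` presents `C` as an extension of a product of matrix algebras
by a nilpotent ideal. -/
def IsSplitModNilpotent (Ψ : C →ₐ[k] PiMatrix n k) : Prop :=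
  Function.Surjective Ψ ∧ IsNilpotent (LinearMap.ker Ψ.toLinearMap)

/-- The column vectors of size `n i`, with `C` acting through the `i`-th component of `Ψ`. -/
def ColumnModule (_Ψ : C →ₐ[k] PiMatrix n k) (i : κ) := n i → k

namespace ColumnModule

variable (Ψ : C →ₐ[k] PiMatrix n k) (i : κ)

instance : AddCommGroup (ColumnModule Ψ i) := inferInstanceAs (AddCommGroup (n i → k))

instance : Module C (ColumnModule Ψ i) :=
  Module.compHom (n i → k) ((Pi.evalRingHom _ i).comp (Ψ : C →+* PiMatrix n k))

/-- The identification of the column vectors with the column module. -/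
def mk : (n i → k) ≃+ ColumnModule Ψ i := AddEquiv.refl _

variable {Ψ i}

theorem smul_mk (c : C) (v : n i → k) : c • mk Ψ i v = mk Ψ i (Ψ c i *ᵥ v) := rfl

theorem algebraMap_smul_mk (t : k) (v : n i → k) :
    algebraMap k C t • mk Ψ i v = mk Ψ i (t • v) := by
  rw [smul_mk, AlgHom.commutes, Pi.algebraMap_apply, Algebra.algebraMap_eq_smul_one,
    smul_mulVec, one_mulVec]

theorem mk_eq_sum (v : n i → k) :
    mk Ψ i v = ∑ a, algebraMap k C (v a) • mk Ψ i (Pi.single a 1) := by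
  simp only [algebraMap_smul_mk, ← map_sum]
  congr 1
  exact pi_eq_sum_univ' v

theorem linearMap_ext {N : Type*} [AddCommGroup N] [Module C N] {g h : ColumnModule Ψ i →ₗ[C] N}
    (hgh : ∀ a, g (mk Ψ i (Pi.single a 1)) = h (mk Ψ i (Pi.single a 1))) : g = h := by
  ext x
  obtain ⟨v, rfl⟩ := (mk Ψ i).surjective x
  simp only [mk_eq_sum v, map_sum, map_smul, hgh]

theorem exists_linearMap_mk_eq_sum {N : Type*} [AddCommGroup N] [Module k N] [Module C N]
    [IsScalarTower k C N] {γ : n i → N} (hγ : ∀ a c, ∑ b, Ψ c i b a • γ b = c • γ a) :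
    ∃ h : ColumnModule Ψ i →ₗ[C] N, ∀ v, h (mk Ψ i v) = ∑ a, v a • γ a := by
  refine ⟨
    { toFun := fun x => Fintype.linearCombination k γ ((mk Ψ i).symm x)
      map_add' := fun x y => by rw [map_add, map_add]
      map_smul' := fun c x => ?_ }, fun v => Fintype.linearCombination_apply k γ v⟩
  obtain ⟨v, rfl⟩ := (mk Ψ i).surjective x
  simp only [smul_mk, AddEquiv.symm_apply_apply, Fintype.linearCombination_apply, RingHom.id_apply,
    Finset.smul_sum]
  have hcomm (a : n i) : c • v a • γ a = v a • c • γ a := smul_algebra_smul_comm (v a) c (γ a)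
  simp only [hcomm, ← hγ, mulVec, dotProduct, Finset.sum_smul, Finset.smul_sum, smul_smul, mul_comm]
  exact Finset.sum_comm

theorem exists_smul_mk_eq (hΨ : Function.Surjective Ψ) {v w : n i → k} {a : n i} {t : k}
    (ht : t * v a = 1) : ∃ c : C, c • mk Ψ i v = mk Ψ i w := by
  classical
  obtain ⟨c, hc⟩ := hΨ (Pi.single i (vecMulVec w (Pi.single a t)))
  refine ⟨c, ?_⟩
  rw [smul_mk, hc, Pi.single_eq_same, vecMulVec_mulVec, single_dotProduct, ht, MulOpposite.op_one,
    one_smul]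

theorem toSpanSingleton_mk_single_surjective (hΨ : Function.Surjective Ψ) (a : n i) :
    Function.Surjective (LinearMap.toSpanSingleton C _ (mk Ψ i (Pi.single a 1))) := fun x => by
  obtain ⟨w, rfl⟩ := (mk Ψ i).surjective x
  exact exists_smul_mk_eq hΨ (t := 1) (by rw [Pi.single_eq_same, one_mul])

theorem isEmpty_linearEquiv [Nonempty (n i)] [Nontrivial k] (hΨ : Function.Surjective Ψ)
    {j : κ} (hij : i ≠ j) : IsEmpty (ColumnModule Ψ i ≃ₗ[C] ColumnModule Ψ j) := by
  classical
  refine ⟨fun f => ?_⟩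
  obtain ⟨c, hc⟩ := hΨ (Pi.single i 1)
  have hci : c • mk Ψ i 1 = mk Ψ i 1 := by rw [smul_mk, hc, Pi.single_eq_same, one_mulVec]
  have hcj (w : n j → k) : c • mk Ψ j w = 0 := by
    rw [smul_mk, hc, Pi.single_eq_of_ne hij.symm, zero_mulVec, map_zero]
  obtain ⟨w, hw⟩ := (mk Ψ j).surjective (f (mk Ψ i 1))
  have hf : f (mk Ψ i 1) = 0 := by rw [← hci, map_smul, ← hw, hcj]
  exact one_ne_zero ((mk Ψ i).map_eq_zero_iff.1 (f.map_eq_zero_iff.1 hf))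

/-- The map from the left ideal generated by `e` to a column module sending `e` to the `a`-th
column of its image. -/
def proj (Ψ : C →ₐ[k] PiMatrix n k) (i : κ) (a : n i) (e : C) :
    Ideal.span {e} →ₗ[C] ColumnModule Ψ i :=
  LinearMap.toSpanSingleton C _ (mk Ψ i (Pi.single a 1)) ∘ₗ (Ideal.span {e}).subtype

theorem proj_apply (a : n i) (e : C) (x : Ideal.span {e}) :
    proj Ψ i a e x = (x : C) • mk Ψ i (Pi.single a 1) := rfl

variable [DecidableEq κ]

theorem map_mul_eq_single_vecMulVec {a : n i} {e : C} (he : Ψ e = Pi.single i (single a a 1))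
    (c : C) :
    Ψ (c * e) = Pi.single i (vecMulVec (Ψ c i *ᵥ Pi.single a 1) (Pi.single a 1)) := by
  rw [map_mul, he, ← Pi.single_mul_right, single_eq_single_vecMulVec_single, mul_vecMulVec]

theorem map_mul_eq_zero {a : n i} {e : C} (he : Ψ e = Pi.single i (single a a 1)) {c : C}
    (hc : c • mk Ψ i (Pi.single a 1) = 0) : Ψ (c * e) = 0 := by
  rw [smul_mk, (mk Ψ i).map_eq_zero_iff] at hc
  rw [map_mul_eq_single_vecMulVec he, hc, zero_vecMulVec, Pi.single_zero]

end ColumnModule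

open ColumnModule

variable {Ψ : C →ₐ[k] PiMatrix n k}

theorem sum_single_single_one [Fintype κ] [DecidableEq κ] :
    ∑ i, ∑ a, (Pi.single i (single a a 1) : PiMatrix n k) = 1 := by
  have hsum (i : κ) : ∑ a, (Pi.single i (single a a 1) : PiMatrix n k) = Pi.single i 1 := by
    rw [← sum_single_one]
    exact (map_sum (AddMonoidHom.single (fun i => Matrix (n i) (n i) k) i) _ _).symm
  simp only [hsum]
  exact Finset.univ_sum_single 1

theorem isIdempotentElem_single_single_one [DecidableEq κ] (i : κ) (a : n i) :
    IsIdempotentElem (Pi.single i (single a a 1) : PiMatrix n k) := by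
  rw [IsIdempotentElem, ← Pi.single_mul, single_mul_single_same, one_mul]

namespace IsSplitModNilpotent

theorem isNilpotent_of_eq_zero (hΨ : IsSplitModNilpotent Ψ) {c : C} (hc : Ψ c = 0) :
    IsNilpotent c := by
  obtain ⟨N, hN⟩ := hΨ.2
  have hcN : c ^ N ∈ LinearMap.ker Ψ.toLinearMap ^ N := Submodule.pow_mem_pow _ hc N
  rw [hN] at hcN
  exact ⟨N, hcN⟩

theorem smul_eq_zero {N : Type*} [AddCommGroup N] [Module C N] [IsSimpleModule C N]
    (hΨ : IsSplitModNilpotent Ψ) {c : C} (hc : Ψ c = 0) (v : N) : c • v = 0 :=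
  smul_eq_zero_of_forall_isNilpotent_mul
    (fun b => hΨ.isNilpotent_of_eq_zero (by rw [map_mul, hc, mul_zero])) v

theorem exists_isIdempotentElem (hΨ : IsSplitModNilpotent Ψ) {E : PiMatrix n k}
    (hE : IsIdempotentElem E) : ∃ e, IsIdempotentElem e ∧ Ψ e = E :=
  exists_isIdempotentElem_eq_of_ker_isNilpotent (Ψ : C →+* PiMatrix n k)
    (fun _ => hΨ.isNilpotent_of_eq_zero) E (hΨ.1 E) hE

theorem isProjectiveCover_proj {k C : Type u} {n : κ → Type} [∀ i, Fintype (n i)]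
    [∀ i, DecidableEq (n i)] [CommRing k] [Ring C] [Algebra k C] {Ψ : C →ₐ[k] PiMatrix n k}
    [DecidableEq κ] (hΨ : IsSplitModNilpotent Ψ) {i : κ} {a : n i} {e : C}
    (he : IsIdempotentElem e) (hea : Ψ e = Pi.single i (single a a 1)) :
    IsProjectiveCover (proj Ψ i a e) := by
  refine isProjectiveCover_of_forall_isNilpotent he (fun x => ?_) fun x hx => ?_
  · obtain ⟨c, hc⟩ := toSpanSingleton_mk_single_surjective hΨ.1 a x
    refine ⟨⟨c * e, Ideal.mul_mem_left _ c (Ideal.mem_span_singleton_self e)⟩, ?_⟩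
    rw [← hc, proj_apply, LinearMap.toSpanSingleton_apply, mul_smul, smul_mk e, hea,
      Pi.single_eq_same, single_eq_single_vecMulVec_single, vecMulVec_mulVec,
      single_dotProduct, Pi.single_eq_same, mul_one, MulOpposite.op_one, one_smul]
  · rw [proj_apply] at hx
    refine hΨ.isNilpotent_of_eq_zero ?_
    rw [← mul_eq_self_of_mem_span_singleton he x.2, map_mul_eq_zero hea hx]

end IsSplitModNilpotent

end ColumnModule

section Field

open ColumnModule

variable {κ : Type*} {n : κ → Type*} [∀ i, Fintype (n i)] [∀ i, DecidableEq (n i)]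
  {k C : Type*} [Field k] [Ring C] [Algebra k C] {Ψ : C →ₐ[k] PiMatrix n k}

theorem ColumnModule.isSimpleModule (hΨ : Function.Surjective Ψ) (i : κ) [Nonempty (n i)] :
    IsSimpleModule C (ColumnModule Ψ i) := by
  refine isSimpleModule_iff_toSpanSingleton_surjective.2
    ⟨inferInstanceAs (Nontrivial (n i → k)), fun x hx y => ?_⟩
  obtain ⟨v, rfl⟩ := (mk Ψ i).surjective x
  obtain ⟨w, rfl⟩ := (mk Ψ i).surjective y
  obtain ⟨a, ha⟩ := Function.ne_iff.1 ((mk Ψ i).map_ne_zero_iff.1 hx)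
  exact exists_smul_mk_eq hΨ (inv_mul_cancel₀ ha)

theorem IsSplitModNilpotent.exists_linearEquiv [Finite κ] [∀ i, Nonempty (n i)]
    (hΨ : IsSplitModNilpotent Ψ) (N : Type*) [AddCommGroup N] [Module C N] [IsSimpleModule C N] :
    ∃ i, Nonempty (N ≃ₗ[C] ColumnModule Ψ i) := by
  classical
  cases nonempty_fintype κ
  have := IsSimpleModule.nontrivial C N
  obtain ⟨v, hv⟩ := exists_ne (0 : N)
  choose e he using fun (i : κ) (a : n i) => hΨ.1 (Pi.single i (single a a 1))
  have hsum : ∑ i, ∑ a, e i a • v = v := by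
    simp only [← Finset.sum_smul]
    rw [← sub_eq_zero, ← one_smul C v, smul_smul, ← sub_smul]
    refine hΨ.smul_eq_zero ?_ v
    simp only [mul_one, map_sub, map_sum, map_one, he, sum_single_single_one, sub_self]
  obtain ⟨i, a, hia⟩ : ∃ i a, e i a • v ≠ 0 := by
    by_contra! h
    exact hv (by rw [← hsum]; simp only [h, Finset.sum_const_zero])
  obtain ⟨g, hg⟩ := exists_linearMap_apply_eq (e i a • v)
    (toSpanSingleton_mk_single_surjective hΨ.1 a) fun c hc => by
      rw [smul_smul]
      exact hΨ.smul_eq_zero (map_mul_eq_zero (he i a) hc) v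
  have := ColumnModule.isSimpleModule hΨ.1 i
  have hg0 : g ≠ 0 := fun h => hia (by rw [← hg, h, LinearMap.zero_apply])
  exact ⟨i, ⟨(LinearEquiv.ofBijective g (LinearMap.bijective_of_ne_zero hg0)).symm⟩⟩

theorem IsSplitModNilpotent.isCompleteListOfSimples {κ : Type} {n : κ → Type} [Finite κ]
    [∀ i, Fintype (n i)] [∀ i, DecidableEq (n i)] [∀ i, Nonempty (n i)] {k C : Type u} [Field k]
    [Ring C] [Algebra k C] {Ψ : C →ₐ[k] PiMatrix n k} (hΨ : IsSplitModNilpotent Ψ) {ι : Type u}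
    (r : ι ≃ κ) : IsCompleteListOfSimples C fun i => ⟨ColumnModule Ψ (r i)⟩ := by
  refine ⟨fun i => isSimpleModule hΨ.1 _, fun i j hij => isEmpty_linearEquiv hΨ.1
    (r.injective.ne hij), fun N _ _ _ => ?_⟩
  obtain ⟨i, hi⟩ := hΨ.exists_linearEquiv N
  rw [← r.apply_symm_apply i] at hi
  exact ⟨r.symm i, hi⟩

end Field

theorem exists_isSplitModNilpotent_of_isAlgClosed (K C : Type*) [Field K] [IsAlgClosed K] [Ring C]
    [Algebra K C] [Module.Finite K C] :
    ∃ (m : ℕ) (d : Fin m → ℕ) (_ : ∀ i, NeZero (d i))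
      (Ψ : C →ₐ[K] PiMatrix (fun i => Fin (d i)) K), IsSplitModNilpotent Ψ := by
  have : IsArtinianRing C := .of_finite K C
  obtain ⟨m, d, hd, ⟨w⟩⟩ :=
    IsSemisimpleRing.exists_algEquiv_pi_matrix_of_isAlgClosed K (C ⧸ Ring.jacobson C)
  refine ⟨m, d, hd, w.toAlgHom.comp (Ideal.Quotient.mkₐ K (Ring.jacobson C)),
    w.surjective.comp (Ideal.Quotient.mkₐ_surjective K _), ?_⟩
  have hker : LinearMap.ker (w.toAlgHom.comp
      (Ideal.Quotient.mkₐ K (Ring.jacobson C))).toLinearMap =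
        (Ring.jacobson C).restrictScalars K := by
    ext x
    exact w.map_eq_zero_iff.trans Ideal.Quotient.eq_zero_iff_mem
  obtain ⟨N, hN⟩ := IsSemiprimaryRing.isNilpotent (R := C)
  refine ⟨N + 1, ?_⟩
  rw [hker, ← Submodule.restrictScalars_pow (n := N + 1) N.succ_ne_zero, Submodule.pow_succ, hN,
    Submodule.zero_eq_bot, Submodule.bot_mul]
  rfl

/-! ### Base change -/

section BaseChange

variable {κ : Type*} {n : κ → Type*} [∀ i, Fintype (n i)] [∀ i, DecidableEq (n i)]
  {𝓡 A S T U : Type*} [CommRing 𝓡] [Ring A] [Algebra 𝓡 A] [CommRing S] [Algebra 𝓡 S]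
  [CommRing T] [Algebra 𝓡 T] [CommRing U] [Algebra 𝓡 U]

attribute [local instance] Algebra.TensorProduct.rightAlgebra

/-- Entrywise application of `f` to a tuple of matrices. -/
def PiMatrix.map (n : κ → Type*) [∀ i, Fintype (n i)] [∀ i, DecidableEq (n i)] (f : S →ₐ[𝓡] T) :
    PiMatrix n S →ₐ[𝓡] PiMatrix n T :=
  AlgHom.pi fun i => f.mapMatrix.comp (Pi.evalAlgHom 𝓡 _ i)

/-- The map `A ⊗ S → A ⊗ T` induced by `f : S → T`. -/
noncomputable abbrev tensorMap (A : Type*) [Ring A] [Algebra 𝓡 A] (f : S →ₐ[𝓡] T) :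
    A ⊗[𝓡] S →ₐ[𝓡] A ⊗[𝓡] T :=
  Algebra.TensorProduct.map (AlgHom.id 𝓡 A) f

theorem PiMatrix.map_apply (f : S →ₐ[𝓡] T) (m : PiMatrix n S) (i : κ) (a b : n i) :
    PiMatrix.map n f m i a b = f (m i a b) := rfl

/-- The `T`-linear extension to `A ⊗ T` of a homomorphism from `A` to a product of matrix algebras
over `T`. -/
noncomputable def PiMatrix.extend (φ : A →ₐ[𝓡] PiMatrix n T) : A ⊗[𝓡] T →ₐ[T] PiMatrix n T :=
  (AlgHom.liftEquiv 𝓡 T A (PiMatrix n T) φ).comp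
    (Algebra.TensorProduct.commRight 𝓡 T A).symm.toAlgHom

theorem PiMatrix.extend_tmul (φ : A →ₐ[𝓡] PiMatrix n T) (a : A) (t : T) :
    PiMatrix.extend φ (a ⊗ₜ t) = t • φ a := rfl

/-- The base change along `f : S → T` of a homomorphism from `A ⊗ S` to a product of matrix
algebras. -/
noncomputable def PiMatrix.baseChange (f : S →ₐ[𝓡] T) (Ψ : A ⊗[𝓡] S →ₐ[S] PiMatrix n S) :
    A ⊗[𝓡] T →ₐ[T] PiMatrix n T :=
  PiMatrix.extend ((PiMatrix.map n f).comp
    ((Ψ.restrictScalars 𝓡).comp Algebra.TensorProduct.includeLeft))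

open PiMatrix

theorem PiMatrix.baseChange_tmul (f : S →ₐ[𝓡] T) (Ψ : A ⊗[𝓡] S →ₐ[S] PiMatrix n S) (a : A) (t : T) :
    baseChange f Ψ (a ⊗ₜ t) = t • PiMatrix.map n f (Ψ (a ⊗ₜ 1)) := rfl

theorem tmul_eq_smul (a : A) (s : S) : a ⊗ₜ[𝓡] s = s • (a ⊗ₜ[𝓡] 1 : A ⊗[𝓡] S) := by
  rw [Algebra.smul_def, Algebra.TensorProduct.right_algebraMap_apply,
    Algebra.TensorProduct.tmul_mul_tmul, one_mul, mul_one]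

theorem tensorMap_smul (f : S →ₐ[𝓡] T) (s : S) (x : A ⊗[𝓡] S) :
    tensorMap A f (s • x) = f s • tensorMap A f x := by
  simp only [Algebra.smul_def, map_mul, Algebra.TensorProduct.right_algebraMap_apply,
    Algebra.TensorProduct.map_tmul, map_one]

/-- `tensorMap A f` as an `f`-semilinear map. -/
noncomputable def tensorMapₛₗ (A : Type*) [Ring A] [Algebra 𝓡 A] (f : S →ₐ[𝓡] T) :
    A ⊗[𝓡] S →ₛₗ[(f : S →+* T)] A ⊗[𝓡] T :=
  { tensorMap A f with map_smul' := tensorMap_smul f }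

protected theorem PiMatrix.map_smul (f : S →ₐ[𝓡] T) (s : S) (m : PiMatrix n S) :
    PiMatrix.map n f (s • m) = f s • PiMatrix.map n f m := by
  ext i a b
  exact map_mul f _ _

theorem PiMatrix.baseChange_tensorMap (f : S →ₐ[𝓡] T) (Ψ : A ⊗[𝓡] S →ₐ[S] PiMatrix n S)
    (x : A ⊗[𝓡] S) : baseChange f Ψ (tensorMap A f x) = PiMatrix.map n f (Ψ x) := by
  induction x with
  | zero => simp only [map_zero]
  | tmul a s =>
    rw [Algebra.TensorProduct.map_tmul, baseChange_tmul, tmul_eq_smul a s, map_smul,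
      PiMatrix.map_smul, AlgHom.id_apply]
  | add x y hx hy => simp only [map_add, hx, hy]

theorem span_range_tensorMap (f : S →ₐ[𝓡] T) :
    Submodule.span T (Set.range (tensorMap A f)) = ⊤ := by
  refine eq_top_iff.2 fun x _ => ?_
  induction x with
  | zero => exact zero_mem _
  | tmul a t =>
    rw [tmul_eq_smul]
    refine Submodule.smul_mem _ t (Submodule.subset_span ⟨a ⊗ₜ 1, ?_⟩)
    rw [Algebra.TensorProduct.map_tmul, map_one, AlgHom.id_apply]
  | add x y hx hy => exact add_mem (hx trivial) (hy trivial)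

theorem span_image_tensorMap_span (f : S →ₐ[𝓡] T) (X : Set (A ⊗[𝓡] S)) :
    Submodule.span T (tensorMap A f '' Submodule.span S X) =
      Submodule.span T (tensorMap A f '' X) := by
  refine le_antisymm (Submodule.span_le.2 ?_)
    (Submodule.span_mono (Set.image_mono Submodule.subset_span))
  have hX : X ⊆ (Submodule.span T (tensorMap A f '' X)).comap (tensorMapₛₗ A f) := fun x hx =>
    Submodule.subset_span ⟨x, hx, rfl⟩
  exact Set.image_subset_iff.2 (Submodule.span_le.2 hX)

theorem PiMatrix.baseChange_unique {f : S →ₐ[𝓡] T} {Ψ : A ⊗[𝓡] S →ₐ[S] PiMatrix n S}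
    {Φ : A ⊗[𝓡] T →ₐ[T] PiMatrix n T}
    (h : ∀ x, Φ (tensorMap A f x) = PiMatrix.map n f (Ψ x)) : Φ = baseChange f Ψ := by
  have : Φ.toLinearMap = (baseChange f Ψ).toLinearMap :=
    LinearMap.ext_on_range (span_range_tensorMap f) fun x =>
      (h x).trans (baseChange_tensorMap f Ψ x).symm
  exact AlgHom.toLinearMap_injective this

theorem tensorMap_tensorMap (g : T →ₐ[𝓡] U) (f : S →ₐ[𝓡] T) (x : A ⊗[𝓡] S) :
    tensorMap A g (tensorMap A f x) = tensorMap A (g.comp f) x := by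
  rw [tensorMap, tensorMap, tensorMap, ← AlgHom.comp_apply, ← Algebra.TensorProduct.map_comp,
    AlgHom.id_comp]

theorem PiMatrix.baseChange_comp (g : T →ₐ[𝓡] U) (f : S →ₐ[𝓡] T) (Ψ : A ⊗[𝓡] S →ₐ[S] PiMatrix n S) :
    baseChange g (baseChange f Ψ) = baseChange (g.comp f) Ψ :=
  baseChange_unique fun x => by
    rw [← tensorMap_tensorMap, baseChange_tensorMap, baseChange_tensorMap]
    rfl

theorem exists_linearMap_comp_eq_of_basis {I M N P : Type*} {f : S →+* T} [AddCommGroup M]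
    [Module S M] [AddCommGroup N] [Module T N] [AddCommGroup P] [Module T P]
    (b : Module.Basis I S M) (c : Module.Basis I T N) {j : M →ₛₗ[f] N} (hj : ∀ i, j (b i) = c i)
    (g : M →ₛₗ[f] P) : ∃ h : N →ₗ[T] P, ∀ m, h (j m) = g m := by
  refine ⟨c.constr T (g ∘ b), fun m => ?_⟩
  have hcomp : (c.constr T (g ∘ b)).comp j = g := b.ext fun i => by
    rw [LinearMap.comp_apply, hj, Module.Basis.constr_basis, Function.comp_apply]
  exact LinearMap.congr_fun hcomp m

/-- The matrix units, as a basis of a product of matrix algebras. -/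
noncomputable def PiMatrix.basis (n : κ → Type*) [∀ i, Fintype (n i)] [Fintype κ]
    (T : Type*) [CommRing T] : Module.Basis (Σ i, n i × n i) T (PiMatrix n T) :=
  Pi.basis fun i => Matrix.stdBasis T (n i) (n i)

theorem PiMatrix.map_single_single_one [DecidableEq κ] (f : S →ₐ[𝓡] T) (i : κ) (a b : n i) :
    PiMatrix.map n f (Pi.single i (single a b 1)) = Pi.single i (single a b 1) := by
  ext j c d
  rw [PiMatrix.map_apply]
  obtain rfl | hj := eq_or_ne j i
  · rw [Pi.single_eq_same, Pi.single_eq_same]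
    simp only [single_apply, apply_ite f, map_one, map_zero]
  · rw [Pi.single_eq_of_ne hj, Pi.single_eq_of_ne hj, Matrix.zero_apply,
      Matrix.zero_apply, map_zero]

theorem PiMatrix.map_basis [Fintype κ] (f : S →ₐ[𝓡] T) (p : Σ i, n i × n i) :
    PiMatrix.map n f (PiMatrix.basis n S p) = PiMatrix.basis n T p := by
  classical
  obtain ⟨i, a, b⟩ := p
  rw [PiMatrix.basis, PiMatrix.basis, Pi.basis_apply, Pi.basis_apply, stdBasis_eq_single,
    stdBasis_eq_single, map_single_single_one]

variable {f : S →ₐ[𝓡] T} {Ψ : A ⊗[𝓡] S →ₐ[S] PiMatrix n S}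

theorem PiMatrix.exists_baseChange_section [Finite κ] (f : S →ₐ[𝓡] T)
    (hΨ : Function.Surjective Ψ) :
    ∃ (σ : PiMatrix n S →ₗ[S] A ⊗[𝓡] S) (σ' : PiMatrix n T →ₗ[T] A ⊗[𝓡] T),
      (∀ m, Ψ (σ m) = m) ∧ (∀ m, baseChange f Ψ (σ' m) = m) ∧
        ∀ m, σ' (PiMatrix.map n f m) = tensorMap A f (σ m) := by
  cases nonempty_fintype κ
  obtain ⟨σ, hσ⟩ := Module.projective_lifting_property Ψ.toLinearMap LinearMap.id hΨ
  replace hσ (m : PiMatrix n S) : Ψ (σ m) = m := LinearMap.congr_fun hσ m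
  let mapₛₗ : PiMatrix n S →ₛₗ[(f : S →+* T)] PiMatrix n T :=
    { PiMatrix.map n f with map_smul' := PiMatrix.map_smul f }
  obtain ⟨σ', hσ'⟩ := exists_linearMap_comp_eq_of_basis (j := mapₛₗ) (PiMatrix.basis n S)
    (PiMatrix.basis n T) (PiMatrix.map_basis f) ((tensorMapₛₗ A f).comp σ)
  replace hσ' (m : PiMatrix n S) : σ' (PiMatrix.map n f m) = tensorMap A f (σ m) := hσ' m
  refine ⟨σ, σ', hσ, fun m => ?_, hσ'⟩
  suffices h : (baseChange f Ψ).toLinearMap ∘ₗ σ' = LinearMap.id from LinearMap.congr_fun h m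
  refine (PiMatrix.basis n T).ext fun p => ?_
  rw [LinearMap.comp_apply, LinearMap.id_apply, ← PiMatrix.map_basis f, hσ',
    AlgHom.toLinearMap_apply, baseChange_tensorMap, hσ]

theorem PiMatrix.baseChange_surjective [Finite κ] (f : S →ₐ[𝓡] T) (hΨ : Function.Surjective Ψ) :
    Function.Surjective (baseChange f Ψ) :=
  let ⟨_, σ', _, hσ', _⟩ := exists_baseChange_section f hΨ
  fun m => ⟨σ' m, hσ' m⟩

theorem PiMatrix.ker_baseChange [Finite κ] (f : S →ₐ[𝓡] T) (hΨ : Function.Surjective Ψ) :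
    LinearMap.ker (baseChange f Ψ).toLinearMap =
      Submodule.span T (tensorMap A f '' LinearMap.ker Ψ.toLinearMap) := by
  obtain ⟨σ, σ', hσ, -, hσ'⟩ := exists_baseChange_section f hΨ
  refine le_antisymm (fun x hx => ?_) (Submodule.span_le.2 ?_)
  · suffices h : ∀ y, y - σ' (baseChange f Ψ y) ∈
        Submodule.span T (tensorMap A f '' LinearMap.ker Ψ.toLinearMap) by
      have hx0 : baseChange f Ψ x = 0 := hx
      simpa only [hx0, map_zero, sub_zero] using h x
    intro y
    have hy : y ∈ Submodule.span T (Set.range (tensorMap A f)) := by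
      rw [span_range_tensorMap]; trivial
    induction hy using Submodule.span_induction with
    | mem y hy =>
      obtain ⟨z, rfl⟩ := hy
      rw [baseChange_tensorMap, hσ', ← map_sub]
      refine Submodule.subset_span ⟨_, ?_, rfl⟩
      change Ψ (z - σ (Ψ z)) = 0
      rw [map_sub, hσ, sub_self]
    | zero => simp only [map_zero, sub_zero, zero_mem]
    | add y z _ _ hy hz =>
      rw [map_add, map_add, add_sub_add_comm]
      exact add_mem hy hz
    | smul t y _ hy =>
      rw [map_smul, map_smul, ← smul_sub]
      exact Submodule.smul_mem _ t hy
  · rintro _ ⟨x, hx, rfl⟩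
    change baseChange f Ψ (tensorMap A f x) = 0
    rw [baseChange_tensorMap, show Ψ x = 0 from hx, map_zero]

theorem PiMatrix.ker_baseChange_pow [Finite κ] (f : S →ₐ[𝓡] T) (hΨ : Function.Surjective Ψ)
    (N : ℕ) : LinearMap.ker (baseChange f Ψ).toLinearMap ^ N =
      Submodule.span T (tensorMap A f '' ↑(LinearMap.ker Ψ.toLinearMap ^ N)) := by
  rw [ker_baseChange f hΨ, Submodule.span_pow, ← Set.image_pow (tensorMap A f),
    Submodule.pow_eq_span_pow_set, span_image_tensorMap_span]

protected theorem IsSplitModNilpotent.baseChange [Finite κ] (hΨ : IsSplitModNilpotent Ψ)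
    (f : S →ₐ[𝓡] T) : IsSplitModNilpotent (PiMatrix.baseChange f Ψ) := by
  obtain ⟨hsurj, N, hN⟩ := hΨ
  refine ⟨baseChange_surjective f hsurj, N, ?_⟩
  rw [ker_baseChange_pow f hsurj, hN, Submodule.zero_eq_bot, Submodule.bot_coe,
    Set.image_singleton, map_zero, Submodule.span_zero_singleton, Submodule.zero_eq_bot]

namespace ColumnModule

/-- Entrywise application of `f` to a column. -/
noncomputable def map (f : S →ₐ[𝓡] T) (Ψ : A ⊗[𝓡] S →ₐ[S] PiMatrix n S) (i : κ) :
    ColumnModule Ψ i →+ ColumnModule (baseChange f Ψ) i :=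
  ((mk _ i).toAddMonoidHom.comp (AddMonoidHom.compLeft (f : S →+ T) (n i))).comp
    (mk Ψ i).symm.toAddMonoidHom

variable {i : κ}

theorem map_mk (v : n i → S) : map f Ψ i (mk Ψ i v) = mk _ i (f ∘ v) := rfl

theorem map_mk_single (a : n i) :
    map f Ψ i (mk Ψ i (Pi.single a 1)) = mk _ i (Pi.single a 1) := by
  rw [map_mk]
  congr 1
  ext b
  simp only [Function.comp_apply, Pi.single_apply, apply_ite f, map_one, map_zero]

protected theorem map_smul (x : A ⊗[𝓡] S) (m : ColumnModule Ψ i) :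
    map f Ψ i (x • m) = tensorMap A f x • map f Ψ i m := by
  obtain ⟨v, rfl⟩ := (mk Ψ i).surjective m
  rw [smul_mk, map_mk, map_mk, smul_mk, baseChange_tensorMap]
  congr 1
  ext a
  exact RingHom.map_mulVec (f : S →+* T) _ v a

end ColumnModule

/-- The restriction of a ring homomorphism `j` to the left ideals generated by `e` and `j e`. -/
def spanSingletonMap {R R' : Type*} [Ring R] [Ring R'] (j : R →+* R') (e : R) :
    Ideal.span {e} →+ Ideal.span {j e} :=
  ((j : R →+ R').comp (Ideal.span {e}).subtype.toAddMonoidHom).codRestrict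
    (Ideal.span {j e}) fun x => by
      obtain ⟨c, hc⟩ := Ideal.mem_span_singleton'.1 x.2
      exact Ideal.mem_span_singleton'.2 ⟨j c, by rw [← map_mul, hc]; rfl⟩

open ColumnModule in
theorem proj_spanSingletonMap {i : κ} (a : n i) (e : A ⊗[𝓡] S) (x : Ideal.span {e}) :
    proj (baseChange f Ψ) i a ((tensorMap A f : A ⊗[𝓡] S →+* A ⊗[𝓡] T) e)
        (spanSingletonMap (tensorMap A f : A ⊗[𝓡] S →+* A ⊗[𝓡] T) e x) =
      ColumnModule.map f Ψ i (proj Ψ i a e x) := by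
  rw [proj_apply, proj_apply, ColumnModule.map_smul, map_mk_single]
  rfl

theorem sum_baseChange_smul {f : S →ₐ[𝓡] T} {Ψ : A ⊗[𝓡] S →ₐ[S] PiMatrix n S} {i : κ}
    {N : Type*} [AddCommGroup N] [Module T N] [Module (A ⊗[𝓡] T) N]
    [IsScalarTower T (A ⊗[𝓡] T) N] {γ : n i → N}
    (hγ : ∀ y a, ∑ b, f (Ψ y i b a) • γ b = tensorMap A f y • γ a) (a : n i) (x : A ⊗[𝓡] T) :
    ∑ b, baseChange f Ψ x i b a • γ b = x • γ a := by
  have hx : x ∈ Submodule.span T (Set.range (tensorMap A f)) := by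
    rw [span_range_tensorMap]; trivial
  induction hx using Submodule.span_induction with
  | mem x hx =>
    obtain ⟨y, rfl⟩ := hx
    rw [baseChange_tensorMap]
    exact hγ y a
  | zero => simp only [map_zero, Pi.zero_apply, Matrix.zero_apply, zero_smul,
      Finset.sum_const_zero]
  | add x y _ _ hx hy =>
    rw [add_smul, ← hx, ← hy, ← Finset.sum_add_distrib]
    simp only [map_add, Pi.add_apply, Matrix.add_apply, add_smul]
  | smul t x _ hx =>
    rw [smul_assoc, ← hx, Finset.smul_sum]
    simp only [_root_.map_smul, Pi.smul_apply, Matrix.smul_apply, smul_assoc]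

section Universe

variable {𝓡 A S T : Type u} [CommRing 𝓡] [Ring A] [Algebra 𝓡 A] [CommRing S] [Algebra 𝓡 S]
  [CommRing T] [Algebra 𝓡 T] {n : κ → Type} [∀ i, Fintype (n i)] [∀ i, DecidableEq (n i)]

open ColumnModule in
theorem ColumnModule.isScalarExtension_map (f : S →ₐ[𝓡] T) (Ψ : A ⊗[𝓡] S →ₐ[S] PiMatrix n S)
    (i : κ) : IsScalarExtension (tensorMap A f : A ⊗[𝓡] S →+* A ⊗[𝓡] T) (ColumnModule Ψ i)
      (ColumnModule (baseChange f Ψ) i) (map f Ψ i) := by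
  refine ⟨ColumnModule.map_smul, fun N _ _ g hg => ?_⟩
  let : Module T N := Module.compHom N (algebraMap T (A ⊗[𝓡] T))
  have : IsScalarTower T (A ⊗[𝓡] T) N := .of_algebraMap_smul fun _ _ => rfl
  let γ (a : n i) : N := g (mk Ψ i (Pi.single a 1))
  have hg_mk (v : n i → S) : g (mk Ψ i v) = ∑ a, f (v a) • γ a := by
    rw [mk_eq_sum, map_sum]
    refine Finset.sum_congr rfl fun a _ => ?_
    rw [hg, ← algebraMap_smul (A ⊗[𝓡] T) (f (v a)) (γ a)]
    simp only [Algebra.TensorProduct.right_algebraMap_apply, RingHom.coe_coe,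
      Algebra.TensorProduct.map_tmul, map_one, γ]
  have hγ (y : A ⊗[𝓡] S) (a : n i) : ∑ b, f (Ψ y i b a) • γ b = tensorMap A f y • γ a := by
    have hy : tensorMap A f y • γ a = g (mk Ψ i (Ψ y i *ᵥ Pi.single a 1)) := by
      rw [← smul_mk, hg]; rfl
    rw [hy, hg_mk, mulVec_single_one]
    rfl
  obtain ⟨h, hh⟩ := exists_linearMap_mk_eq_sum (sum_baseChange_smul hγ)
  have hmap (m : ColumnModule Ψ i) : h (map f Ψ i m) = g m := by
    obtain ⟨v, rfl⟩ := (mk Ψ i).surjective m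
    rw [map_mk, hh, hg_mk]
    rfl
  exact ⟨h, hmap, fun h' hh' => linearMap_ext fun a => by rw [← map_mk_single, hh', hmap]⟩

theorem isScalarExtension_spanSingletonMap {R R' : Type u} [Ring R] [Ring R'] (j : R →+* R')
    {e : R} (he : IsIdempotentElem e) :
    IsScalarExtension j (Ideal.span {e}) (Ideal.span {j e}) (spanSingletonMap j e) := by
  refine ⟨fun c x => Subtype.ext (map_mul j c x), fun N _ _ g hg => ?_⟩
  let e' : Ideal.span {e} := ⟨e, Ideal.mem_span_singleton_self e⟩
  have hx (x : Ideal.span {e}) : (x : R) • e' = x :=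
    Subtype.ext (mul_eq_self_of_mem_span_singleton he x.2)
  refine ⟨LinearMap.toSpanSingleton R' N (g e') ∘ₗ (Ideal.span {j e}).subtype, fun x => ?_,
    fun h hh => ?_⟩
  · change j x • g e' = g x
    rw [← hg, hx]
  · ext ⟨x, hx'⟩
    obtain ⟨c, rfl⟩ := Submodule.mem_span_singleton.1 hx'
    change h (c • spanSingletonMap j e e') = (c * j e) • g e'
    rw [_root_.map_smul, hh, mul_smul, ← hg, hx e']

end Universe

section Descent

variable {K : Type*} [CommRing K] [Algebra 𝓡 K]

theorem exists_fg_forall_le {α : Type*} [Finite α] {S : α → Subalgebra 𝓡 K}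
    (hS : ∀ x, (S x).FG) : ∃ T : Subalgebra 𝓡 K, T.FG ∧ ∀ x, S x ≤ T := by
  choose s hs using hS
  refine ⟨Algebra.adjoin 𝓡 (⋃ x, s x), Subalgebra.fg_def.2
    ⟨_, Set.finite_iUnion fun x => (s x).finite_toSet, rfl⟩, fun x => ?_⟩
  rw [← hs x]
  exact Algebra.adjoin_mono (Set.subset_iUnion (fun x => (s x : Set K)) x)

theorem comm_tensorMap (f : S →ₐ[𝓡] T) (z : A ⊗[𝓡] S) :
    TensorProduct.comm 𝓡 A T (tensorMap A f z) =
      f.toLinearMap.rTensor A (TensorProduct.comm 𝓡 A S z) :=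
  (LinearMap.congr_fun (LinearMap.rTensor_comp_comm f.toLinearMap) z).symm

theorem exists_fg_mem_range_tensorMap (z : A ⊗[𝓡] K) :
    ∃ S : Subalgebra 𝓡 K, S.FG ∧ z ∈ Set.range (tensorMap A S.val) := by
  obtain ⟨S, hS, y, hy⟩ := TensorProduct.Algebra.exists_of_fg (TensorProduct.comm 𝓡 A K z)
  refine ⟨S, hS, (TensorProduct.comm 𝓡 A S).symm y, ?_⟩
  rw [← (TensorProduct.comm 𝓡 A K).injective.eq_iff, comm_tensorMap, LinearEquiv.apply_symm_apply,
    hy]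

theorem range_tensorMap_mono {S S' : Subalgebra 𝓡 K} (h : S ≤ S') :
    Set.range (tensorMap A S.val) ⊆ Set.range (tensorMap A S'.val) := by
  rintro _ ⟨x, rfl⟩
  exact ⟨tensorMap A (Subalgebra.inclusion h) x, tensorMap_tensorMap _ _ x⟩

theorem exists_fg_tensorMap_eq_zero {S : Subalgebra 𝓡 K} (hS : S.FG) {z : A ⊗[𝓡] S}
    (hz : tensorMap A S.val z = 0) :
    ∃ (S' : Subalgebra 𝓡 K) (h : S ≤ S'), S'.FG ∧ tensorMap A (Subalgebra.inclusion h) z = 0 := by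
  obtain ⟨S', h, hS', hz'⟩ := TensorProduct.Algebra.eq_of_fg_of_subtype_eq hS
    (t := TensorProduct.comm 𝓡 A S z) (t' := 0)
    (by rw [← comm_tensorMap, hz, map_zero, map_zero])
  refine ⟨S', h, hS', ?_⟩
  rwa [← comm_tensorMap, map_zero, LinearEquiv.map_eq_zero_iff] at hz'

theorem PiMatrix.exists_fg_mem_range_map [Finite κ] (m : PiMatrix n K) :
    ∃ S : Subalgebra 𝓡 K, S.FG ∧ m ∈ (PiMatrix.map n S.val).range := by
  refine ⟨Algebra.adjoin 𝓡 (Set.range fun p : Σ i, n i × n i => m p.1 p.2.1 p.2.2),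
    Subalgebra.fg_def.2 ⟨_, Set.finite_range _, rfl⟩, ?_⟩
  exact ⟨fun i => of fun a b => ⟨m i a b, Algebra.subset_adjoin ⟨⟨i, a, b⟩, rfl⟩⟩, rfl⟩

theorem PiMatrix.map_injective (hf : Function.Injective f) :
    Function.Injective (PiMatrix.map n f) := fun m m' h => by
  ext i a b
  exact hf (congrFun (congrFun (congrFun h i) a) b)

theorem PiMatrix.range_map_le {S S' : Subalgebra 𝓡 K} (h : S ≤ S') :
    (PiMatrix.map n S.val).range ≤ (PiMatrix.map n S'.val).range := by
  rintro _ ⟨m, rfl⟩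
  exact ⟨PiMatrix.map n (Subalgebra.inclusion h) m, rfl⟩

theorem PiMatrix.exists_fg_baseChange_eq [Finite κ] [Algebra.FiniteType 𝓡 A]
    (Ψ : A ⊗[𝓡] K →ₐ[K] PiMatrix n K) :
    ∃ S : Subalgebra 𝓡 K, S.FG ∧ ∃ Ψ', baseChange S.val Ψ' = Ψ := by
  let φ : A →ₐ[𝓡] PiMatrix n K :=
    (Ψ.restrictScalars 𝓡).comp Algebra.TensorProduct.includeLeft
  obtain ⟨s, hs⟩ := Algebra.FiniteType.out (R := 𝓡) (A := A)
  choose S hS hmem using fun a : s => exists_fg_mem_range_map (𝓡 := 𝓡) (φ a)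
  obtain ⟨T, hT, hST⟩ := exists_fg_forall_le hS
  have hφ (a : A) : φ a ∈ (PiMatrix.map n T.val).range := by
    have hle : Algebra.adjoin 𝓡 (s : Set A) ≤ (PiMatrix.map n T.val).range.comap φ :=
      Algebra.adjoin_le fun a ha => range_map_le (hST ⟨a, ha⟩) (hmem ⟨a, ha⟩)
    exact hle (hs ▸ Algebra.mem_top)
  let e := AlgEquiv.ofInjective (PiMatrix.map n T.val) (map_injective Subtype.val_injective)
  let φ' : A →ₐ[𝓡] PiMatrix n T := e.symm.toAlgHom.comp (φ.codRestrict _ hφ)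
  have hφ' (a : A) : PiMatrix.map n T.val (φ' a) = φ a :=
    congrArg Subtype.val (e.apply_symm_apply ⟨φ a, hφ a⟩)
  refine ⟨T, hT, extend φ', (baseChange_unique fun x => ?_).symm⟩
  induction x with
  | zero => simp only [map_zero]
  | tmul a t =>
    rw [Algebra.TensorProduct.map_tmul, extend_tmul, PiMatrix.map_smul, hφ', tmul_eq_smul, map_smul]
    rfl
  | add x y hx hy => simp only [map_add, hx, hy]

theorem PiMatrix.surjective_of_exists_eq_basis [Fintype κ]
    (h : ∀ p, ∃ x, Ψ x = PiMatrix.basis n S p) : Function.Surjective Ψ := by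
  change Function.Surjective Ψ.toLinearMap
  rw [← LinearMap.range_eq_top, eq_top_iff, ← (PiMatrix.basis n S).span_eq, Submodule.span_le]
  rintro _ ⟨p, rfl⟩
  exact h p

theorem baseChange_val_baseChange_inclusion {S S' : Subalgebra 𝓡 K} (h : S ≤ S')
    (Ψ : A ⊗[𝓡] S →ₐ[S] PiMatrix n S) :
    baseChange S'.val (baseChange (Subalgebra.inclusion h) Ψ) = baseChange S.val Ψ :=
  baseChange_comp _ _ Ψ

variable {Ψ : A ⊗[𝓡] K →ₐ[K] PiMatrix n K}

theorem PiMatrix.exists_fg_baseChange_eq_of_surjective [Finite κ] [Algebra.FiniteType 𝓡 A]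
    (hΨ : Function.Surjective Ψ) :
    ∃ S : Subalgebra 𝓡 K, S.FG ∧ ∃ Ψ' : A ⊗[𝓡] S →ₐ[S] PiMatrix n S,
      Function.Surjective Ψ' ∧ baseChange S.val Ψ' = Ψ := by
  cases nonempty_fintype κ
  obtain ⟨S₀, hS₀, Ψ₀, rfl⟩ := exists_fg_baseChange_eq Ψ
  choose z hz using fun p => hΨ (PiMatrix.basis n K p)
  choose S₁ hS₁ hmem using fun p => exists_fg_mem_range_tensorMap (𝓡 := 𝓡) (z p)
  obtain ⟨S₂, hS₂, hle⟩ := exists_fg_forall_le hS₁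
  let S := S₀ ⊔ S₂
  let Ψ' := baseChange (Subalgebra.inclusion (le_sup_left : S₀ ≤ S)) Ψ₀
  refine ⟨S, hS₀.sup hS₂, Ψ', surjective_of_exists_eq_basis fun p => ?_,
    baseChange_val_baseChange_inclusion _ _⟩
  obtain ⟨x, hx⟩ := range_tensorMap_mono ((hle p).trans le_sup_right : S₁ p ≤ S) (hmem p)
  refine ⟨x, map_injective (f := S.val) Subtype.val_injective ?_⟩
  rw [map_basis, ← hz, ← hx, ← baseChange_tensorMap, baseChange_val_baseChange_inclusion]

theorem IsSplitModNilpotent.exists_fg_baseChange_eq [Finite κ] [Module.Finite 𝓡 A]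
    (hΨ : IsSplitModNilpotent Ψ) :
    ∃ S : Subalgebra 𝓡 K, S.FG ∧ ∃ Ψ' : A ⊗[𝓡] S →ₐ[S] PiMatrix n S,
      IsSplitModNilpotent Ψ' ∧ baseChange S.val Ψ' = Ψ := by
  cases nonempty_fintype κ
  obtain ⟨S₁, hS₁, Ψ₁, hΨ₁, rfl⟩ := exists_fg_baseChange_eq_of_surjective hΨ.1
  obtain ⟨-, N, hN⟩ := hΨ
  have : Module.Finite S₁ (A ⊗[𝓡] S₁) :=
    .equiv (Algebra.TensorProduct.commRight 𝓡 S₁ A).toLinearEquiv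
  have := Module.finitePresentation_of_projective S₁ (PiMatrix n S₁)
  obtain ⟨s, hs⟩ : (LinearMap.ker Ψ₁.toLinearMap ^ N).FG :=
    .pow (Module.FinitePresentation.fg_ker _ hΨ₁) N
  have hzero (z : s) : tensorMap A S₁.val z.1 = 0 := by
    rw [← Submodule.mem_bot K, ← Submodule.zero_eq_bot, ← hN, ker_baseChange_pow _ hΨ₁, ← hs,
      span_image_tensorMap_span]
    exact Submodule.subset_span ⟨z, z.2, rfl⟩
  choose S₂ hle₁ hS₂ hz using fun z => exists_fg_tensorMap_eq_zero hS₁ (hzero z)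
  obtain ⟨S₃, hS₃, hle₂⟩ := exists_fg_forall_le hS₂
  let S := S₁ ⊔ S₃
  have hle : S₁ ≤ S := le_sup_left
  refine ⟨S, hS₁.sup hS₃, baseChange (Subalgebra.inclusion hle) Ψ₁,
    ⟨baseChange_surjective _ hΨ₁, N, ?_⟩, baseChange_val_baseChange_inclusion _ _⟩
  rw [ker_baseChange_pow _ hΨ₁, ← hs, span_image_tensorMap_span, Submodule.zero_eq_bot,
    Submodule.span_eq_bot]
  rintro _ ⟨z, hzs, rfl⟩
  have hS₂S : S₂ ⟨z, hzs⟩ ≤ S := (hle₂ _).trans le_sup_right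
  calc tensorMap A (Subalgebra.inclusion hle) z
      = tensorMap A (Subalgebra.inclusion hS₂S)
          (tensorMap A (Subalgebra.inclusion (hle₁ ⟨z, hzs⟩)) z) := by
        rw [tensorMap_tensorMap]; rfl
    _ = 0 := by rw [hz ⟨z, hzs⟩, map_zero]

end Descent

end BaseChange

/-! ### Quasifinite subalgebras of a field -/

theorem isQuasifiniteDomain_saturation_powers {R K : Type*} [CommRing R] [Field K] [Algebra R K]
    {R' : Subalgebra R K} [Module.Finite R R'] {D : K} (hD : D ≠ 0)
    (hDR' : Submonoid.powers D ≤ R'.toSubmonoid) :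
    IsQuasifiniteDomain R (R'.saturation (Submonoid.powers D) hDR') := by
  have hD_mem : D ∈ R' := hDR' (Submonoid.mem_powers D)
  let incl := Subalgebra.inclusion (Subalgebra.le_saturation (H := hDR'))
  refine ⟨inferInstance, incl.range,
    .of_surjective incl.rangeRestrict.toLinearMap incl.rangeRestrict_surjective,
    incl.rangeRestrict ⟨D, hD_mem⟩, .mk _ ?_ ?_ ?_⟩
  · have hinv : D⁻¹ ∈ R'.saturation (Submonoid.powers D) hDR' :=
      ⟨D, Submonoid.mem_powers D, by simp [hD]⟩
    exact .of_mul_eq_one ⟨D⁻¹, hinv⟩ (Subtype.ext (mul_inv_cancel₀ hD))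
  · rintro ⟨s, _, ⟨N, rfl⟩, hs⟩
    exact ⟨N, incl.rangeRestrict ⟨_, hs⟩, Subtype.ext (mul_comm _ _)⟩
  · exact fun a b hab => ⟨0, by rw [Subtype.ext hab]⟩

-- A common denominator makes the generators of `S₀` integral; adjoin them and invert it.
theorem exists_isQuasifiniteDomain_of_fg {R B K : Type*} [CommRing R] [CommRing B] [Algebra R B]
    [Field K] [Algebra R K] [Algebra B K] [IsScalarTower R B K] [FaithfulSMul B K]
    [Algebra.IsAlgebraic B K] (hB : Function.Surjective (algebraMap R B)) {S₀ : Subalgebra R K}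
    (hS₀ : S₀.FG) : ∃ S : Subalgebra R K, S₀ ≤ S ∧ IsQuasifiniteDomain R S := by
  obtain ⟨s, rfl⟩ := hS₀
  have : NoZeroDivisors B := (FaithfulSMul.algebraMap_injective B K).noZeroDivisors _
    (map_zero _) (map_mul _)
  obtain ⟨b, hb, hs⟩ := Algebra.IsAlgebraic.exists_integral_multiples B s
  obtain ⟨d, rfl⟩ := hB b
  have hd : algebraMap R K d ≠ 0 := by
    rw [IsScalarTower.algebraMap_apply R B K]
    exact (map_ne_zero_iff _ (FaithfulSMul.algebraMap_injective B K)).2 hb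
  have hintegral : ∀ x ∈ (d • ·) '' (s : Set K), IsIntegral R x := by
    have : Algebra.IsIntegral R B := ⟨(algebraMap R B).isIntegral_of_surjective hB⟩
    rintro _ ⟨x, hx, rfl⟩
    exact isIntegral_trans _ (algebraMap_smul B d x ▸ hs x hx)
  let R' := Algebra.adjoin R ((d • ·) '' (s : Set K))
  have : Module.Finite R R' :=
    Algebra.finite_adjoin_of_finite_of_isIntegral (s.finite_toSet.image _) hintegral
  have hdR' : Submonoid.powers (algebraMap R K d) ≤ R'.toSubmonoid :=
    Submonoid.powers_le.2 (R'.algebraMap_mem d)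
  refine ⟨R'.saturation _ hdR', Algebra.adjoin_le fun x hx =>
    ⟨algebraMap R K d, Submonoid.mem_powers _, ?_⟩, isQuasifiniteDomain_saturation_powers hd hdR'⟩
  rw [← Algebra.smul_def]
  exact Algebra.subset_adjoin ⟨x, hx, rfl⟩

/-! ### Existence of split models -/

section

attribute [local instance] Algebra.TensorProduct.rightAlgebra

theorem exists_isQuasifiniteDomain_isSplitModNilpotent {𝓡 B K : Type*} (A : Type*) [CommRing 𝓡]
    [Ring A] [Algebra 𝓡 A] [Module.Finite 𝓡 A] [CommRing B] [Algebra 𝓡 B] [Field K] [IsAlgClosed K]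
    [Algebra 𝓡 K] [Algebra B K] [IsScalarTower 𝓡 B K] [FaithfulSMul B K] [Algebra.IsAlgebraic B K]
    (hB : Function.Surjective (algebraMap 𝓡 B)) :
    ∃ S : Subalgebra 𝓡 K, IsQuasifiniteDomain 𝓡 S ∧ ∃ (m : ℕ) (d : Fin m → ℕ)
      (_ : ∀ i, NeZero (d i)) (Ψ : A ⊗[𝓡] S →ₐ[S] PiMatrix (fun i => Fin (d i)) S),
      IsSplitModNilpotent Ψ := by
  have : Module.Finite K (A ⊗[𝓡] K) :=
    .equiv (Algebra.TensorProduct.commRight 𝓡 K A).toLinearEquiv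
  obtain ⟨m, d, hd, Ψ, hΨ⟩ := exists_isSplitModNilpotent_of_isAlgClosed K (A ⊗[𝓡] K)
  obtain ⟨S₀, hS₀, Ψ₀, hΨ₀, -⟩ := hΨ.exists_fg_baseChange_eq
  obtain ⟨S, hle, hS⟩ := exists_isQuasifiniteDomain_of_fg hB hS₀
  exact ⟨S, hS, m, d, hd, _, hΨ₀.baseChange (Subalgebra.inclusion hle)⟩

theorem exists_quasifiniteExtension_isSplitModNilpotent (𝓡 A K : Type u) [CommRing 𝓡] [Ring A]
    [Algebra 𝓡 A] [Module.Finite 𝓡 A] [Field K] [IsAlgClosed K] [Algebra 𝓡 K] :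
    ∃ (E : QuasifiniteExtension 𝓡) (_ : E.carrier →ₐ[𝓡] K) (m : ℕ) (d : Fin m → ℕ)
      (_ : ∀ i, NeZero (d i))
      (Ψ : A ⊗[𝓡] E.carrier →ₐ[E.carrier] PiMatrix (fun i => Fin (d i)) E.carrier),
      IsSplitModNilpotent Ψ := by
  obtain ⟨B, _, _, _, _, _, hB⟩ : ∃ (B : Type u) (_ : CommRing B) (_ : Algebra 𝓡 B)
      (_ : Algebra B K) (_ : FaithfulSMul B K) (_ : IsScalarTower 𝓡 B K),
      Function.Surjective (algebraMap 𝓡 B) :=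
    ⟨(⊥ : Subalgebra 𝓡 K), inferInstance, inferInstance, inferInstance, inferInstance,
      inferInstance, fun ⟨_, r, hr⟩ => ⟨r, Subtype.ext hr⟩⟩
  have : IsDomain B := (FaithfulSMul.algebraMap_injective B K).isDomain
  let F := FractionRing B
  let : Algebra F K := FractionRing.liftAlgebra B K
  have : IsScalarTower B F K := FractionRing.isScalarTower_liftAlgebra B K
  have : IsScalarTower 𝓡 F K := .to₁₃₄ 𝓡 B F K
  let K₀ := algebraicClosure F K
  have : Algebra.IsAlgebraic B K₀ :=
    (IsFractionRing.comap_isAlgebraic_iff (K := F)).2 inferInstance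
  have : IsAlgClosed K₀ := IsAlgClosure.isAlgClosed F
  have : FaithfulSMul B K₀ := .trans B F K₀
  have : IsScalarTower 𝓡 B K₀ :=
    .of_algebraMap_eq fun r => Subtype.ext (IsScalarTower.algebraMap_apply 𝓡 B K r)
  obtain ⟨S, hS, m, d, hd, Ψ, hΨ⟩ :=
    exists_isQuasifiniteDomain_isSplitModNilpotent (K := K₀) A hB
  exact ⟨⟨S, hS⟩, (K₀.val.restrictScalars 𝓡).comp S.val, m, d, hd, Ψ, hΨ⟩

theorem lifting_of_simples_and_projective_covers_general (𝓡 A K : Type u) [CommRing 𝓡]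
    [Ring A] [Algebra 𝓡 A] [Module.Finite 𝓡 A] [Field K] [IsAlgClosed K] [Algebra 𝓡 K]
    (ι : Type u) (V : ι → BundledModule (A ⊗[𝓡] K)) (hV : IsCompleteListOfSimples (A ⊗[𝓡] K) V) :
    ∃ E : QuasifiniteExtension 𝓡,
      ∃ (L P : ι → BundledModule (A ⊗[𝓡] E.carrier))
        (π : ∀ i, (P i).carrier →ₗ[A ⊗[𝓡] E.carrier] (L i).carrier),
        ∀ (k : Type u) [Field k] [IsAlgClosed k] [Algebra E.carrier k] [Algebra 𝓡 k]
          [IsScalarTower 𝓡 E.carrier k],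
          ∃ (Lk Pk : ι → BundledModule (A ⊗[𝓡] k))
            (fL : ∀ i, (L i).carrier →+ (Lk i).carrier)
            (fP : ∀ i, (P i).carrier →+ (Pk i).carrier),
            (∀ i, IsScalarExtension (baseChangeRingHom 𝓡 A E.carrier k)
                (L i).carrier (Lk i).carrier (fL i)) ∧
            (∀ i, IsScalarExtension (baseChangeRingHom 𝓡 A E.carrier k)
                (P i).carrier (Pk i).carrier (fP i)) ∧
            IsCompleteListOfSimples (A ⊗[𝓡] k) Lk ∧
            (∀ i, ∃ πk : (Pk i).carrier →ₗ[A ⊗[𝓡] k] (Lk i).carrier,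
              (∀ m : (P i).carrier, πk (fP i m) = fL i (π i m)) ∧
              IsProjectiveCover πk) := by
  obtain ⟨E, f, m, d, hd, Ψ, hΨ⟩ := exists_quasifiniteExtension_isSplitModNilpotent 𝓡 A K
  obtain ⟨r⟩ := hV.nonempty_equiv ((hΨ.baseChange f).isCompleteListOfSimples Equiv.ulift.{u})
  choose e he heE using fun j =>
    hΨ.exists_isIdempotentElem (isIdempotentElem_single_single_one j (0 : Fin (d j)))
  refine ⟨E, fun i => ⟨ColumnModule Ψ (r i).down⟩, fun i => ⟨Ideal.span {e (r i).down}⟩,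
    fun i => ColumnModule.proj Ψ (r i).down 0 _, fun k _ _ _ _ _ => ?_⟩
  let g := IsScalarTower.toAlgHom 𝓡 E.carrier k
  have hΨk := hΨ.baseChange g
  have hek (j : Fin m) :
      PiMatrix.baseChange g Ψ (tensorMap A g (e j)) = Pi.single j (single 0 0 1) := by
    rw [PiMatrix.baseChange_tensorMap, heE, PiMatrix.map_single_single_one]
  refine ⟨fun i => ⟨ColumnModule (PiMatrix.baseChange g Ψ) (r i).down⟩,
    fun i => ⟨Ideal.span {baseChangeRingHom 𝓡 A E.carrier k (e (r i).down)}⟩,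
    fun i => ColumnModule.map g Ψ _, fun i => spanSingletonMap _ _,
    fun i => ColumnModule.isScalarExtension_map g Ψ _,
    fun i => isScalarExtension_spanSingletonMap _ (he _),
    hΨk.isCompleteListOfSimples (r.trans Equiv.ulift), fun i =>
    ⟨ColumnModule.proj (PiMatrix.baseChange g Ψ) (r i).down 0 _,
      proj_spanSingletonMap 0 _, hΨk.isProjectiveCover_proj ((he _).map _) (hek _)⟩⟩

end

end

/-- Let `𝓡` be a quasifinite domain over `ℤ` and `A` an `𝓡`-algebra
which is flat and finitely generated as an `𝓡`-module.  Let `Qbar` be an algebraic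
closure of `ℚ` (with a given `𝓡`-algebra structure, i.e. a geometric point of `𝓡`), and
let `ι` index a complete irredundant list `V` of the simple `A ⊗[𝓡] Qbar`-modules.  Then
there exist a quasifinite domain `𝓡'` over `𝓡` and families `(L i)`, `(P i)` of
`A ⊗[𝓡] 𝓡'`-modules, with surjections-to-be `π i : P i → L i`, such that for every
geometric point `𝓡' → k` (an algebraically closed field `k` with a compatible algebra
structure): the base changes of the `L i` to `A ⊗[𝓡] k` form a complete, pairwise
non-isomorphic list of the simple `A ⊗[𝓡] k`-modules, and for each `i` the base change
of `P i`, with the base-changed map to the base change of `L i`, is its projective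
cover. -/
theorem lifting_of_simples_and_projective_covers
    (𝓡 : Type u) [CommRing 𝓡] (h𝓡 : IsQuasifiniteDomain ℤ 𝓡)
    (A : Type u) [Ring A] [Algebra 𝓡 A] [Module.Finite 𝓡 A] [Module.Flat 𝓡 A]
    (Qbar : Type u) [Field Qbar] [Algebra ℚ Qbar] [IsAlgClosure ℚ Qbar] [Algebra 𝓡 Qbar]
    (ι : Type u) (V : ι → BundledModule (A ⊗[𝓡] Qbar))
    (hV : IsCompleteListOfSimples (A ⊗[𝓡] Qbar) V) :
    ∃ E : QuasifiniteExtension 𝓡,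
      ∃ (L P : ι → BundledModule (A ⊗[𝓡] E.carrier))
        (π : ∀ i, (P i).carrier →ₗ[A ⊗[𝓡] E.carrier] (L i).carrier),
        ∀ (k : Type u) [Field k] [IsAlgClosed k] [Algebra E.carrier k] [Algebra 𝓡 k]
          [IsScalarTower 𝓡 E.carrier k],
          ∃ (Lk Pk : ι → BundledModule (A ⊗[𝓡] k))
            (fL : ∀ i, (L i).carrier →+ (Lk i).carrier)
            (fP : ∀ i, (P i).carrier →+ (Pk i).carrier),
            (∀ i, IsScalarExtension (baseChangeRingHom 𝓡 A E.carrier k)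
                (L i).carrier (Lk i).carrier (fL i)) ∧
            (∀ i, IsScalarExtension (baseChangeRingHom 𝓡 A E.carrier k)
                (P i).carrier (Pk i).carrier (fP i)) ∧
            IsCompleteListOfSimples (A ⊗[𝓡] k) Lk ∧
            (∀ i, ∃ πk : (Pk i).carrier →ₗ[A ⊗[𝓡] k] (Lk i).carrier,
              (∀ m : (P i).carrier, πk (fP i m) = fL i (π i m)) ∧
              IsProjectiveCover πk) := by
  have := IsAlgClosure.isAlgClosed ℚ (K := Qbar)
  exact lifting_of_simples_and_projective_covers_general 𝓡 A Qbar ι V hV
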